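/- arXiv:1601.07988 — 4 statements merged into one kernel-verified Lean document; each statement's English description precedes it below -/
import Mathlib

section
/- For every n ≥ 2, the number of words L ∈ 𝓛_n with exactly one P1-match (equivalently, lattice paths from (0,0) to (n,n) with exactly one east step below the subdiagonal y = x − 1) equals 4·(2n−1)! / ((n−2)!·(n+2)!). -/
/-!
Words over the alphabet {E, N} are encoded as `List Bool`,
with `true` representing an east step `E` and `false` a north step `N`.
The word `w = w_1 ⋯ w_{2n}` corresponds to the lattice path from `(0,0)` to
`(n,n)` whose `j`-th step is east if `w_j = true` and north if `w_j = false`.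
-/

/-- `w ∈ 𝓛_n`: the word `w` has exactly `n` `E`'s and `n` `N`'s. -/
def memL (n : ℕ) (w : List Bool) : Prop :=
  w.count true = n ∧ w.count false = n

/-- The (0-indexed, increasing) list of positions at which the letter `b` occurs in `w`. -/
def occPos (w : List Bool) (b : Bool) : List ℕ :=
  (List.range w.length).filter (fun j => w.getD j (!b) == b)

/-- `ps_w({i, i+1})` (with `i` 1-indexed): the length-4 word obtained from `w` by
deleting, for each `j ∉ {i, i+1}`, the `j`-th occurrence of `E` and the `j`-th
occurrence of `N` (counted from left to right); i.e. the word formed by the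
`i`-th and `(i+1)`-th occurrences of `E` and of `N`, read in their original order. -/
def pairedSubword (w : List Bool) (i : ℕ) : List Bool :=
  let keep : List ℕ := [(occPos w true).getD (i-1) 0, (occPos w true).getD i 0,
                        (occPos w false).getD (i-1) 0, (occPos w false).getD i 0]
  ((List.range w.length).filter (fun j => keep.contains j)).map (fun j => w.getD j true)

/-- `P`-mch(w): the number of paired steps `i` with `1 ≤ i ≤ n-1` at which the
paired pattern `P` matches in `w ∈ 𝓛_n`. -/
def pmch (n : ℕ) (P w : List Bool) : ℕ :=
  ((Finset.Icc 1 (n-1)).filter (fun i => pairedSubword w i = P)).card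

def P1 : List Bool := [true, true, false, false]   -- EENN
def P2 : List Bool := [true, false, true, false]   -- ENEN
def P3 : List Bool := [false, true, true, false]   -- NEEN
def P4 : List Bool := [true, false, false, true]   -- ENNE
def P5 : List Bool := [false, true, false, true]   -- NENE
def P6 : List Bool := [false, false, true, true]   -- NNEE

/-!
Let the depth of a lattice point `(x, y)` be `x - y`. The `i`-th paired step of `w` is a match of
`EENN` exactly when the `(i+1)`-st `E` precedes the `i`-th `N`, that is, when the `(i+1)`-st east
step starts at depth at least `1`. So matches are the east steps of the path which start at
positive depth.

Paths without such a step never reach depth `2` and are counted by the reflection principle.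
Paths with exactly one such step reach depth `2` once and step back at once; splitting off the
first step gives a recurrence, which is again solved by a difference of two numbers of
unconstrained walks. For paths from the diagonal to the diagonal the latter is
`(2n-1).choose (n+1) - (2n-1).choose (n+2)`.
-/

/-- The number of east steps of the path `w` that start at depth `x - y` at least `1`, where the
path itself starts at depth `d`. -/
def deepEastSteps : ℤ → List Bool → ℕ
  | _, [] => 0
  | d, true :: w => (if 1 ≤ d then 1 else 0) + deepEastSteps (d + 1) w
  | d, false :: w => deepEastSteps (d - 1) w

/-- The paths with `m` steps from depth `d` to depth `e` in which exactly `r` east steps start at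
positive depth. Letting `d` vary makes their number recursive in the first step. -/
def deepPaths (m : ℕ) (d e : ℤ) (r : ℕ) : Set (List Bool) :=
  {w | w.length = m ∧ d + w.count true - w.count false = e ∧ deepEastSteps d w = r}

/-- The number of walks on `ℤ` from `d` to `0` with `m` steps `±1`, in terms of which constrained
paths are counted by reflection. It is parametrized by the start rather than the displacement
because the recurrences for paths split off the first step. -/
def walkCount : ℕ → ℤ → ℕ
  | 0, d => if d = 0 then 1 else 0
  | m + 1, d => walkCount m (d + 1) + walkCount m (d - 1)

/-- The letter at the (0-indexed) position `j` of `w` is `a`; false for `j` past the end of `w`.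
As a predicate of `j` it makes `Nat.nth` and `Nat.count` available for occurrences of `a`. -/
abbrev letterAt {α : Type*} (w : List α) (a : α) (j : ℕ) : Prop := w[j]? = some a

lemma walkCount_eq_zero_of_lt_neg {m : ℕ} {d : ℤ} (hd : d < -m) : walkCount m d = 0 := by
  induction m generalizing d with
  | zero => exact if_neg (by omega)
  | succ m ih => rw [walkCount, ih (by omega), ih (by omega)]

lemma walkCount_eq_choose (m k : ℕ) : walkCount m (2 * k - m) = m.choose k := by
  induction m generalizing k with
  | zero => cases k <;> grind [walkCount]
  | succ m ih =>
    rw [walkCount, show (2 * k - (m + 1 : ℕ) + 1 : ℤ) = 2 * k - m by push_cast; ring, ih k]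
    cases k with
    | zero =>
      rw [walkCount_eq_zero_of_lt_neg (by omega), Nat.choose_zero_right, Nat.choose_zero_right]
    | succ k =>
      rw [show (2 * (k + 1 : ℕ) - (m + 1 : ℕ) - 1 : ℤ) = 2 * k - m by push_cast; ring, ih k,
        Nat.choose_succ_succ, add_comm]

section Recurrence

variable {m r : ℕ} {d e : ℤ}

lemma ncard_eq_ncard_preimage_cons_add {S : Set (List Bool)} (hS : S.Finite) (hnil : [] ∉ S) :
    S.ncard = (List.cons true ⁻¹' S).ncard + (List.cons false ⁻¹' S).ncard := by
  have hunion : S = List.cons true '' (List.cons true ⁻¹' S) ∪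
      List.cons false '' (List.cons false ⁻¹' S) := by
    ext w
    rcases w with _ | ⟨_ | _, w⟩ <;> simp [hnil]
  have hdisj : Disjoint (List.cons true '' (List.cons true ⁻¹' S))
      (List.cons false '' (List.cons false ⁻¹' S)) := by
    rw [Set.disjoint_left]
    rintro _ ⟨_, _, rfl⟩ ⟨_, _, h⟩
    simp at h
  conv_lhs => rw [hunion]
  rw [Set.ncard_union_eq hdisj (hS.subset (Set.image_preimage_subset _ _))
      (hS.subset (Set.image_preimage_subset _ _)),
    Set.ncard_image_of_injective _ List.cons_injective,
    Set.ncard_image_of_injective _ List.cons_injective]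

lemma ncard_deepPaths_succ :
    (deepPaths (m + 1) d e r).ncard = (List.cons true ⁻¹' deepPaths (m + 1) d e r).ncard +
      (deepPaths m (d - 1) e r).ncard := by
  have hfalse : List.cons false ⁻¹' deepPaths (m + 1) d e r = deepPaths m (d - 1) e r := by
    ext w
    grind [deepPaths, deepEastSteps]
  rw [ncard_eq_ncard_preimage_cons_add, hfalse]
  · exact (List.finite_length_eq Bool (m + 1)).subset fun _ hw => hw.1
  · simp [deepPaths]

lemma ncard_deepPaths_zero_length :
    (deepPaths 0 d e r).ncard = if d = e ∧ r = 0 then 1 else 0 := by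
  have h : deepPaths 0 d e r = {w | w = [] ∧ d = e ∧ r = 0} := by
    ext w
    simp only [deepPaths, List.length_eq_zero_iff, Set.mem_ofPred_eq]
    refine and_congr_right ?_
    rintro rfl
    simp [deepEastSteps, eq_comm]
  rw [h]
  split_ifs with hde <;> simp [hde]

lemma ncard_deepPaths_succ_of_nonpos (hd : d ≤ 0) :
    (deepPaths (m + 1) d e r).ncard =
      (deepPaths m (d + 1) e r).ncard + (deepPaths m (d - 1) e r).ncard := by
  rw [ncard_deepPaths_succ]
  congr 2
  ext w
  grind [deepPaths, deepEastSteps]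

lemma ncard_deepPaths_succ_zero_of_pos (hd : 1 ≤ d) :
    (deepPaths (m + 1) d e 0).ncard = (deepPaths m (d - 1) e 0).ncard := by
  have htrue : List.cons true ⁻¹' deepPaths (m + 1) d e 0 = ∅ := by
    ext w
    simp [deepPaths, deepEastSteps, hd]
  rw [ncard_deepPaths_succ, htrue, Set.ncard_empty, zero_add]

lemma ncard_deepPaths_succ_succ_of_pos (hd : 1 ≤ d) :
    (deepPaths (m + 1) d e (r + 1)).ncard =
      (deepPaths m (d + 1) e r).ncard + (deepPaths m (d - 1) e (r + 1)).ncard := by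
  rw [ncard_deepPaths_succ]
  congr 2
  ext w
  grind [deepPaths, deepEastSteps]

end Recurrence

section Reflection

variable {d e : ℤ}

-- Reflection at depth `2`, which sends `d` to `4 - d`.
lemma ncard_deepPaths_zero_add_walkCount (m : ℕ) (hd : d ≤ 1) (he : e ≤ 2) :
    (deepPaths m d e 0).ncard + walkCount m (4 - d - e) = walkCount m (d - e) := by
  induction m generalizing d with
  | zero =>
    rw [ncard_deepPaths_zero_length]
    grind [walkCount]
  | succ m ih =>
    simp only [walkCount]
    rcases hd.eq_or_lt with rfl | hd
    · have hdown := ih (d := 0) (by norm_num)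
      rw [ncard_deepPaths_succ_zero_of_pos le_rfl]
      grind
    · have hup := ih (d := d + 1) (by omega)
      have hdown := ih (d := d - 1) (by omega)
      rw [ncard_deepPaths_succ_of_nonpos (by omega)]
      grind

lemma ncard_deepPaths_one_add_walkCount (m : ℕ) (hd : d ≤ 1) (he : e ≤ 2) :
    (deepPaths (m + 1) d e 1).ncard + walkCount m (5 - d - e) = walkCount m (3 - d - e) := by
  induction m generalizing d with
  | zero =>
    rcases hd.eq_or_lt with rfl | hd
    · rw [ncard_deepPaths_succ_succ_of_pos le_rfl, ncard_deepPaths_zero_length,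
        ncard_deepPaths_zero_length]
      grind [walkCount]
    · rw [ncard_deepPaths_succ_of_nonpos (by omega), ncard_deepPaths_zero_length,
        ncard_deepPaths_zero_length]
      grind [walkCount]
  | succ m ih =>
    simp only [walkCount]
    rcases hd.eq_or_lt with rfl | hd
    · have hdown := ih (d := 0) (by norm_num)
      have hreturn := ncard_deepPaths_zero_add_walkCount m le_rfl he
      rw [ncard_deepPaths_succ_succ_of_pos le_rfl, ncard_deepPaths_succ_zero_of_pos (by norm_num)]
      grind
    · have hup := ih (d := d + 1) (by omega)
      have hdown := ih (d := d - 1) (by omega)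
      rw [ncard_deepPaths_succ_of_nonpos (by omega)]
      grind

lemma ncard_deepPaths_one_add_choose (n : ℕ) :
    (deepPaths (2 * n + 2) 0 0 1).ncard + (2 * n + 1).choose (n + 3) =
      (2 * n + 1).choose (n + 2) := by
  have h := ncard_deepPaths_one_add_walkCount (d := 0) (e := 0) (2 * n + 1) (by norm_num)
    (by norm_num)
  have hfive : walkCount (2 * n + 1) (5 - 0 - 0) = (2 * n + 1).choose (n + 3) := by
    rw [← walkCount_eq_choose]
    congr 1
    push_cast
    ring
  have hthree : walkCount (2 * n + 1) (3 - 0 - 0) = (2 * n + 1).choose (n + 2) := by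
    rw [← walkCount_eq_choose]
    congr 1
    push_cast
    ring
  rwa [hfive, hthree] at h

end Reflection

lemma choose_sub_choose_eq_factorial (k : ℕ) :
    ((2 * k + 3).choose (k + 3) - (2 * k + 3).choose (k + 4) : ℚ) =
      4 * (2 * k + 3).factorial / (k.factorial * (k + 4).factorial) := by
  have hratio : ((2 * k + 3).choose (k + 4) * (k + 4) : ℚ) = (2 * k + 3).choose (k + 3) * k := by
    have h := Nat.choose_succ_right_eq (2 * k + 3) (k + 3)
    rw [show 2 * k + 3 - (k + 3) = k by omega] at h
    exact_mod_cast h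
  have hfact : ((2 * k + 3).choose (k + 3) : ℚ) =
      (2 * k + 3).factorial / ((k + 3).factorial * k.factorial) := by
    rw [show 2 * k + 3 = k + 3 + k by ring, Nat.cast_add_choose]
  calc ((2 * k + 3).choose (k + 3) - (2 * k + 3).choose (k + 4) : ℚ)
      = 4 * (2 * k + 3).choose (k + 3) / (k + 4) := by
        rw [eq_div_iff (by positivity)]
        linear_combination -hratio
    _ = 4 * (2 * k + 3).factorial / (k.factorial * (k + 4).factorial) := by
        rw [hfact, Nat.factorial_succ (k + 3)]
        push_cast
        field_simp
        ring

section Occurrences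

variable {α : Type*} {w : List α} {a b : α} {j k : ℕ}

lemma lt_length_of_letterAt (h : letterAt w a j) : j < w.length :=
  (List.getElem?_eq_some_iff.1 h).1

lemma finite_letterAt (w : List α) (a : α) : (Set.ofPred (letterAt w a)).Finite :=
  (Set.finite_lt_nat w.length).subset fun _ => lt_length_of_letterAt

variable [DecidableEq α]

lemma count_letterAt (w : List α) (a : α) (j : ℕ) :
    Nat.count (letterAt w a) j = (w.take j).count a := by
  induction j with
  | zero => simp
  | succ j ih =>
    rw [Nat.count_succ, ih, List.take_add_one, List.count_append]
    unfold letterAt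
    cases w[j]? <;> simp [List.count_singleton]

lemma lt_card_letterAt (hk : k < w.count a) (hf : (Set.ofPred (letterAt w a)).Finite) :
    k < hf.toFinset.card := by
  rw [← w.take_length, ← count_letterAt] at hk
  exact hk.trans_le (Nat.count_le_card hf _)

lemma letterAt_nth (hk : k < w.count a) : letterAt w a (Nat.nth (letterAt w a) k) :=
  Nat.nth_mem k (lt_card_letterAt hk)

lemma count_take_nth (hk : k < w.count a) : (w.take (Nat.nth (letterAt w a) k)).count a = k := by
  rw [← count_letterAt, Nat.count_nth (lt_card_letterAt hk)]

lemma nth_count_take (h : letterAt w a j) : Nat.nth (letterAt w a) ((w.take j).count a) = j := by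
  rw [← count_letterAt, Nat.nth_count h]

lemma count_take_lt_count (h : letterAt w a j) : (w.take j).count a < w.count a := by
  rw [← count_letterAt]
  conv_rhs => rw [← w.take_length, ← count_letterAt]
  exact Nat.count_strict_mono h (lt_length_of_letterAt h)

lemma lt_nth_letterAt_iff (hab : a ≠ b) (hj : letterAt w a j) (hk : k < w.count b) :
    j < Nat.nth (letterAt w b) k ↔ (w.take j).count b ≤ k := by
  rw [← count_letterAt]
  refine ⟨fun h => Nat.le_nth_of_count_le h.le, fun h => ?_⟩
  by_contra! hle
  have hne : Nat.nth (letterAt w b) k ≠ j := by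
    intro heq
    have hb := letterAt_nth hk
    rw [heq] at hb
    exact hab (Option.some.inj (hj.symm.trans hb))
  have hlt := Nat.count_strict_mono (letterAt_nth hk) (hle.lt_of_ne hne)
  rw [Nat.count_nth (lt_card_letterAt hk)] at hlt
  omega

end Occurrences

section Matches

variable {n i j k : ℕ} {b : Bool} {w : List Bool}

lemma mem_occPos : j ∈ occPos w b ↔ letterAt w b j := by
  grind [occPos]

lemma occPos_getD (w : List Bool) (b : Bool) (k : ℕ) :
    (occPos w b).getD k 0 = Nat.nth (letterAt w b) k := by
  rw [Nat.nth_eq_getD_sort (finite_letterAt w b)]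
  congr 1
  refine List.SortedLT.eq_of_mem_iff (List.pairwise_lt_range.filter _).sortedLT
    (Finset.sortedLT_sort _) fun j => ?_
  rw [mem_occPos, Finset.mem_sort, Set.Finite.mem_toFinset, Set.mem_ofPred_eq]

lemma filter_range_contains_eq {l : List ℕ} (hl : l.Pairwise (· < ·)) (hk : ∀ j ∈ l, j < k) :
    (List.range k).filter (fun j => l.contains j) = l := by
  refine List.SortedLT.eq_of_mem_iff (List.pairwise_lt_range.filter _).sortedLT hl.sortedLT
    fun j => ?_
  simpa using hk j

lemma lt_of_map_eq_P1 {α : Type*} [Preorder α] {f : α → Bool} {l : List α} {x y : α}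
    (hl : l.Pairwise (· < ·)) (hP : l.map f = P1) (hx : x ∈ l) (hy : y ∈ l)
    (hfx : f x = true) (hfy : f y = false) : x < y := by
  simp only [P1, List.map_eq_cons_iff, List.map_eq_nil_iff] at hP
  obtain ⟨p, _, rfl, hp, q, _, rfl, hq, s, _, rfl, hs, t, _, rfl, ht, rfl⟩ := hP
  simp only [List.mem_cons, List.not_mem_nil, or_false] at hx hy
  grind

lemma pairedSubword_eq_P1_iff (hE : i + 1 < w.count true) (hN : i + 1 < w.count false) :
    pairedSubword w (i + 1) = P1 ↔
      Nat.nth (letterAt w true) (i + 1) < Nat.nth (letterAt w false) i := by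
  have hE₀ := letterAt_nth (i.lt_add_one.trans hE)
  have hE₁ := letterAt_nth hE
  have hN₀ := letterAt_nth (i.lt_add_one.trans hN)
  have hN₁ := letterAt_nth hN
  have hEE := Nat.nth_lt_nth' i.lt_add_one (lt_card_letterAt hE)
  have hNN := Nat.nth_lt_nth' i.lt_add_one (lt_card_letterAt hN)
  simp only [pairedSubword, occPos_getD, Nat.add_sub_cancel]
  constructor
  · intro hP
    refine lt_of_map_eq_P1 (List.pairwise_lt_range.filter _) hP ?_ ?_ ?_ ?_
    · simp [lt_length_of_letterAt hE₁]
    · simp [lt_length_of_letterAt hN₀]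
    · simp [hE₁]
    · simp [hN₀]
  · intro hEN
    rw [filter_range_contains_eq]
    · simp [hE₀, hE₁, hN₀, hN₁, P1]
    · simp only [List.pairwise_cons, List.mem_cons, List.not_mem_nil, or_false]
      grind
    · simp [lt_length_of_letterAt hE₀, lt_length_of_letterAt hE₁, lt_length_of_letterAt hN₀,
        lt_length_of_letterAt hN₁]

lemma deepEastSteps_eq_card (d : ℤ) (w : List Bool) :
    deepEastSteps d w = ((Finset.range w.length).filter fun j => letterAt w true j ∧
      1 ≤ d + (w.take j).count true - (w.take j).count false).card := by
  induction w generalizing d with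
  | nil => rfl
  | cons a w ih =>
    rw [Finset.card_filter, List.length_cons, Finset.sum_range_succ', ← Finset.card_filter]
    cases a <;>
      simp only [deepEastSteps, ih, List.take_succ_cons, List.take_zero, List.count_cons,
        List.count_nil] <;>
      grind

lemma pairedSubword_eq_P1_iff_count_take_lt (hi : 1 ≤ i) (hE : i < w.count true)
    (hN : i < w.count false) :
    pairedSubword w i = P1 ↔ (w.take (Nat.nth (letterAt w true) i)).count false < i := by
  obtain ⟨i, rfl⟩ := Nat.exists_eq_add_of_le' hi
  rw [pairedSubword_eq_P1_iff hE hN,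
    lt_nth_letterAt_iff Bool.noConfusion (letterAt_nth hE) (i.lt_add_one.trans hN),
    Nat.lt_succ_iff]

lemma pmch_P1_eq_deepEastSteps (hw : memL n w) : pmch n P1 w = deepEastSteps 0 w := by
  obtain ⟨hE, hN⟩ := hw
  rw [deepEastSteps_eq_card, pmch]
  refine Finset.card_nbij' (fun i => Nat.nth (letterAt w true) i)
    (fun j => (w.take j).count true) ?_ ?_ ?_ ?_
  · intro i hi
    simp only [Finset.coe_filter, Finset.mem_Icc, Set.mem_ofPred_eq] at hi
    have hlt : i < w.count true := by omega
    have hdepth := (pairedSubword_eq_P1_iff_count_take_lt hi.1.1 hlt (by omega)).1 hi.2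
    simp only [Finset.coe_filter, Finset.mem_range, Set.mem_ofPred_eq, count_take_nth hlt]
    exact ⟨lt_length_of_letterAt (letterAt_nth hlt), letterAt_nth hlt, by omega⟩
  · intro j hj
    simp only [Finset.coe_filter, Finset.mem_range, Set.mem_ofPred_eq] at hj
    obtain ⟨-, hj, hdepth⟩ := hj
    have hlt := count_take_lt_count hj
    simp only [Finset.coe_filter, Finset.mem_Icc, Set.mem_ofPred_eq]
    rw [pairedSubword_eq_P1_iff_count_take_lt (by omega) (by omega) (by omega), nth_count_take hj]
    omega
  · intro i hi
    simp only [Finset.coe_filter, Finset.mem_Icc, Set.mem_ofPred_eq] at hi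
    exact count_take_nth (by omega)
  · intro j hj
    simp only [Finset.coe_filter, Finset.mem_range, Set.mem_ofPred_eq] at hj
    exact nth_count_take hj.2.1

lemma setOf_pmch_P1_eq_deepPaths (n r : ℕ) :
    {w : List Bool | memL n w ∧ pmch n P1 w = r} = deepPaths (2 * n) 0 0 r := by
  ext w
  have hmem : memL n w ↔ w.length = 2 * n ∧ (0 + w.count true - w.count false : ℤ) = 0 := by
    have hlen := w.count_true_add_count_false
    unfold memL
    omega
  simp only [deepPaths, Set.mem_ofPred_eq, ← and_assoc, ← hmem]
  exact and_congr_right fun hw => by rw [pmch_P1_eq_deepEastSteps hw]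

end Matches

theorem count_exactly_one_P1_match (n : ℕ) (hn : 2 ≤ n) :
    ({w : List Bool | memL n w ∧ pmch n P1 w = 1}.ncard : ℚ)
      = 4 * (Nat.factorial (2*n-1)) / ((Nat.factorial (n-2)) * (Nat.factorial (n+2))) := by
  obtain ⟨k, rfl⟩ := Nat.exists_eq_add_of_le' hn
  have hcount : ((deepPaths (2 * (k + 2)) 0 0 1).ncard + (2 * k + 3).choose (k + 4) : ℚ) =
      (2 * k + 3).choose (k + 3) := by
    exact_mod_cast ncard_deepPaths_one_add_choose (k + 1)
  rw [setOf_pmch_P1_eq_deepPaths, eq_sub_of_add_eq hcount, choose_sub_choose_eq_factorial]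
  rfl
end

section
/- For every n ≥ 1, the total number of P2-matches over all words in 𝓛_n satisfies Σ_{L ∈ 𝓛_n} P2-mch(L) = 4^{n−1} − binom(2n−1, n−1). -/
/-!
A word has an `ENEN` match at paired step `i` exactly when its path touches the diagonal at `(i, i)`
from below, arriving by a north step and leaving by an east step. Cutting out these two steps leaves
a word with `i` east and `i - 1` north steps and a word with `n - i - 1` east and `n - i` north
steps. These number half the central binomial coefficients of `i` and of `n - i` respectively, so
the total follows from the convolution identity `∑ C(2i, i) C(2(n-i), n-i) = 4 ^ n` by removing its
two extreme terms.
-/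

section CentralBinom

open Finset.HasAntidiagonal (antidiagonal)

theorem two_mul_sum_antidiagonal_fst_mul {R : Type*} [CommSemiring R] (f : ℕ → R) (n : ℕ) :
    2 * ∑ p ∈ antidiagonal n, p.1 * (f p.1 * f p.2)
      = n * ∑ p ∈ antidiagonal n, f p.1 * f p.2 := by
  have hswap : ∑ p ∈ antidiagonal n, (p.2 : R) * (f p.1 * f p.2)
      = ∑ p ∈ antidiagonal n, p.1 * (f p.1 * f p.2) := by
    rw [← Finset.Nat.sum_antidiagonal_swap]
    exact Finset.sum_congr rfl fun p _ ↦ by rw [Prod.fst_swap, Prod.snd_swap, mul_comm (f p.2)]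
  rw [two_mul]
  nth_rewrite 2 [← hswap]
  rw [← Finset.sum_add_distrib, Finset.mul_sum]
  refine Finset.sum_congr rfl fun p hp ↦ ?_
  rw [← Finset.HasAntidiagonal.mem_antidiagonal.1 hp, Nat.cast_add, add_mul]

theorem sum_antidiagonal_centralBinom_mul_centralBinom (n : ℕ) :
    ∑ p ∈ antidiagonal n, p.1.centralBinom * p.2.centralBinom = 4 ^ n := by
  -- By symmetry, weighting the summand by `p.1` multiplies the sum by `n / 2`; the weighted sums
  -- for `n` and `n + 1` are related by `(i + 1) * C(2i + 2, i + 1) = 2 * (2i + 1) * C(2i, i)`.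
  have hweighted := two_mul_sum_antidiagonal_fst_mul Nat.centralBinom
  simp only [Nat.cast_id] at hweighted
  induction n with
  | zero => simp
  | succ n ih =>
    have hrec : ∑ p ∈ antidiagonal (n + 1), p.1 * (p.1.centralBinom * p.2.centralBinom)
        = 4 * ∑ p ∈ antidiagonal n, p.1 * (p.1.centralBinom * p.2.centralBinom)
          + 2 * ∑ p ∈ antidiagonal n, p.1.centralBinom * p.2.centralBinom := by
      rw [Finset.Nat.sum_antidiagonal_succ, zero_mul, zero_add, Finset.mul_sum, Finset.mul_sum,
        ← Finset.sum_add_distrib]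
      refine Finset.sum_congr rfl fun p _ ↦ ?_
      rw [← mul_assoc, Nat.succ_mul_centralBinom_succ]
      ring
    refine Nat.eq_of_mul_eq_mul_left n.succ_pos ?_
    calc (n + 1) * ∑ p ∈ antidiagonal (n + 1), p.1.centralBinom * p.2.centralBinom
        = 4 * (2 * ∑ p ∈ antidiagonal n, p.1 * (p.1.centralBinom * p.2.centralBinom))
          + 4 * ∑ p ∈ antidiagonal n, p.1.centralBinom * p.2.centralBinom := by
          rw [← hweighted, hrec]
          ring
      _ = (n + 1) * 4 ^ (n + 1) := by
          rw [hweighted, ih]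
          ring

theorem two_mul_centralBinom_add_sum_Icc {n : ℕ} (hn : 1 ≤ n) :
    2 * n.centralBinom + ∑ i ∈ Finset.Icc 1 (n - 1), i.centralBinom * (n - i).centralBinom
      = 4 ^ n := by
  obtain ⟨m, rfl⟩ := Nat.exists_eq_add_of_le' hn
  rw [← sum_antidiagonal_centralBinom_mul_centralBinom,
    Finset.Nat.sum_antidiagonal_eq_sum_range_succ (fun i j ↦ i.centralBinom * j.centralBinom),
    Finset.sum_range_succ, Finset.range_eq_Ico, Finset.sum_eq_sum_Ico_succ_bot m.succ_pos]
  simp only [Nat.centralBinom_zero, Nat.sub_self, Nat.sub_zero, one_mul, mul_one, zero_add]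
  rw [Nat.add_sub_cancel, ← Finset.Ico_add_one_right_eq_Icc, Nat.succ_eq_add_one]
  ring

theorem centralBinom_succ_eq_two_mul_choose (n : ℕ) :
    (n + 1).centralBinom = 2 * (2 * n + 1).choose n := by
  rw [Nat.centralBinom_eq_two_mul_choose, Nat.mul_succ, Nat.choose_succ_succ,
    Nat.choose_symm_half, ← two_mul]

end CentralBinom

section LatticeWords

/-- The words with exactly `p` letters `E` and `q` letters `N`, i.e. the lattice paths from `(0, 0)`
to `(p, q)`, enumerated by their first step. -/
def latticeWords : ℕ → ℕ → Finset (List Bool)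
  | 0, 0 => {[]}
  | p + 1, 0 => (latticeWords p 0).image (List.cons true)
  | 0, q + 1 => (latticeWords 0 q).image (List.cons false)
  | p + 1, q + 1 => (latticeWords p (q + 1)).image (List.cons true) ∪
      (latticeWords (p + 1) q).image (List.cons false)

theorem mem_latticeWords {p q : ℕ} {w : List Bool} :
    w ∈ latticeWords p q ↔ w.count true = p ∧ w.count false = q := by
  induction w generalizing p q with
  | nil => rcases p with _ | p <;> rcases q with _ | q <;> simp [latticeWords]
  | cons b w ih =>
    rcases p with _ | p <;> rcases q with _ | q <;> cases b <;> simp [latticeWords, ih]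

theorem card_latticeWords (p q : ℕ) : (latticeWords p q).card = (p + q).choose p := by
  have card_image_cons (b : Bool) (s : Finset (List Bool)) :
      (s.image (List.cons b)).card = s.card :=
    Finset.card_image_of_injective _ List.cons_injective
  fun_induction latticeWords p q with
  | case1 => simp
  | case2 p ih => simp [card_image_cons, ih]
  | case3 q ih => simp [card_image_cons, ih]
  | case4 p q ihE ihN =>
    have hdisj : Disjoint ((latticeWords p (q + 1)).image (List.cons true))
        ((latticeWords (p + 1) q).image (List.cons false)) := by
      simp [Finset.disjoint_left]
    rw [Finset.card_union_of_disjoint hdisj, card_image_cons, card_image_cons, ihE, ihN,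
      show p + 1 + (q + 1) = p + (q + 1) + 1 by ring, Nat.choose_succ_succ,
      show p + 1 + q = p + (q + 1) by ring]

theorem two_mul_card_latticeWords_succ_left (k : ℕ) :
    2 * (latticeWords (k + 1) k).card = (k + 1).centralBinom := by
  rw [card_latticeWords, Nat.choose_symm_add, centralBinom_succ_eq_two_mul_choose]
  ring_nf

theorem two_mul_card_latticeWords_succ_right (k : ℕ) :
    2 * (latticeWords k (k + 1)).card = (k + 1).centralBinom := by
  rw [card_latticeWords, centralBinom_succ_eq_two_mul_choose]
  ring_nf

theorem finsum_memL_eq_sum_latticeWords {M : Type*} [AddCommMonoid M] (n : ℕ)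
    (f : List Bool → M) :
    ∑ᶠ w ∈ {w : List Bool | memL n w}, f w = ∑ w ∈ latticeWords n n, f w := by
  rw [← finsum_mem_coe_finset]
  congr! 3 with w
  simp [memL, mem_latticeWords]

end LatticeWords

section LetterPos

/-- The position, counted from `0`, of the `(k + 1)`-st occurrence of the letter `b` in `w`. When
there are at most `k` such occurrences the value is `0`, as for the out-of-range entries of `occPos`
in `pairedSubword`. Writing it with `Nat.nth` makes the counting lemmas for `Nat.nth` available. -/
noncomputable def letterPos {α : Type*} (w : List α) (b : α) (k : ℕ) : ℕ :=
  Nat.nth (fun j ↦ w[j]? = some b) k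

variable {α : Type*} [DecidableEq α] {w : List α} {b : α} {k m : ℕ}

theorem count_getElem?_eq_count_take (w : List α) (b : α) (m : ℕ) :
    Nat.count (fun j ↦ w[j]? = some b) m = (w.take m).count b := by
  induction m with
  | zero => simp
  | succ m ih =>
    rw [Nat.count_succ, ih, List.take_add_one, List.count_append]
    rcases w[m]? with _ | c <;> simp [List.count_singleton]

theorem lt_card_toFinset_of_lt_count (hk : k < w.count b)
    (hfin : (Set.ofPred fun j : ℕ ↦ w[j]? = some b).Finite) : k < hfin.toFinset.card :=
  calc k < w.count b := hk
    _ = Nat.count (fun j ↦ w[j]? = some b) w.length := by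
      rw [count_getElem?_eq_count_take, List.take_length]
    _ ≤ hfin.toFinset.card := Nat.count_le_card hfin _

theorem getElem?_letterPos (hk : k < w.count b) : w[letterPos w b k]? = some b :=
  Nat.nth_mem k (lt_card_toFinset_of_lt_count hk)

theorem letterPos_lt_length (hk : k < w.count b) : letterPos w b k < w.length :=
  (List.getElem?_eq_some_iff.1 (getElem?_letterPos hk)).1

theorem count_take_letterPos (hk : k < w.count b) : (w.take (letterPos w b k)).count b = k := by
  rw [← count_getElem?_eq_count_take]
  exact Nat.count_nth (lt_card_toFinset_of_lt_count hk)

theorem letterPos_count_take (hm : w[m]? = some b) :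
    letterPos w b ((w.take m).count b) = m := by
  rw [← count_getElem?_eq_count_take]
  exact Nat.nth_count hm

theorem letterPos_lt_iff (hk : k < w.count b) :
    letterPos w b k < m ↔ k < (w.take m).count b := by
  rw [← count_getElem?_eq_count_take]
  refine ⟨fun h ↦ ?_, Nat.nth_lt_of_lt_count⟩
  calc k < k + 1 := k.lt_succ_self
    _ = Nat.count _ (letterPos w b k + 1) :=
      (Nat.count_nth_succ (lt_card_toFinset_of_lt_count hk)).symm
    _ ≤ _ := Nat.count_monotone _ h

theorem letterPos_lt_letterPos {l : ℕ} (hkl : k < l) (hl : l < w.count b) :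
    letterPos w b k < letterPos w b l :=
  Nat.nth_lt_nth' hkl (lt_card_toFinset_of_lt_count hl)

theorem letterPos_ne_letterPos {c : α} {l : ℕ} (hbc : b ≠ c) (hk : k < w.count b)
    (hl : l < w.count c) : letterPos w b k ≠ letterPos w c l := fun h ↦ by
  have hletter := getElem?_letterPos hk
  rw [h, getElem?_letterPos hl] at hletter
  exact hbc (Option.some_injective _ hletter).symm

theorem getD_occPos (w : List Bool) (b : Bool) (k : ℕ) :
    (occPos w b).getD k 0 = letterPos w b k := by
  have mem_occPos (j : ℕ) : j ∈ occPos w b ↔ w[j]? = some b := by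
    rw [occPos, List.mem_filter, List.mem_range, beq_iff_eq]
    constructor
    · rintro ⟨hj, hb⟩
      rw [List.getElem?_eq_getElem hj, ← hb, List.getD_eq_getElem _ _ hj]
    · intro h
      exact ⟨(List.getElem?_eq_some_iff.1 h).1, by simp [List.getD_eq_getElem?_getD, h]⟩
  have hfin : (Set.ofPred fun j ↦ w[j]? = some b).Finite :=
    (occPos w b).finite_toSet.subset fun j hj ↦ (mem_occPos j).2 hj
  have hsorted : (occPos w b).SortedLT := (List.pairwise_lt_range.filter _).sortedLT
  rw [letterPos, Nat.nth_eq_getD_sort hfin]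
  congr 1
  exact hsorted.eq_of_mem_iff (Finset.sortedLT_sort _) fun j ↦ by simp [mem_occPos]

theorem count_take_true_add_count_take_false {w : List Bool} {m : ℕ} (hm : m ≤ w.length) :
    (w.take m).count true + (w.take m).count false = m := by
  rw [List.count_true_add_count_false, List.length_take, min_eq_left hm]

end LetterPos

section Matches

variable {w : List Bool} {k : ℕ}

theorem pairedSubword_eq_map {l : List ℕ} (hE : k + 1 < w.count true) (hN : k + 1 < w.count false)
    (hsorted : l.Pairwise (· < ·))
    (hmem : ∀ j, j ∈ l ↔ j ∈ [letterPos w true k, letterPos w true (k + 1),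
      letterPos w false k, letterPos w false (k + 1)]) :
    pairedSubword w (k + 1) = l.map fun j ↦ w.getD j true := by
  have lt_length {j : ℕ} (hj : j ∈ l) : j < w.length := by
    rw [hmem] at hj
    simp only [List.mem_cons, List.not_mem_nil, or_false] at hj
    rcases hj with rfl | rfl | rfl | rfl <;> exact letterPos_lt_length (by omega)
  simp only [pairedSubword, Nat.add_sub_cancel, getD_occPos]
  congr 1
  refine (List.pairwise_lt_range.filter _).eq_of_mem_iff hsorted fun j ↦ ?_
  rw [List.mem_filter, List.mem_range, List.contains_iff_mem, ← hmem]
  exact and_iff_right_of_imp lt_length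

theorem pairedSubword_eq_P2_iff_letterPos_lt (hE : k + 1 < w.count true)
    (hN : k + 1 < w.count false) :
    pairedSubword w (k + 1) = P2 ↔ letterPos w true k < letterPos w false k ∧
      letterPos w false k < letterPos w true (k + 1) ∧
      letterPos w true (k + 1) < letterPos w false (k + 1) := by
  have hE' : k < w.count true := k.lt_succ_self.trans hE
  have hN' : k < w.count false := k.lt_succ_self.trans hN
  have hword (l : List ℕ) := pairedSubword_eq_map (l := l) hE hN
  have hEE := letterPos_lt_letterPos k.lt_succ_self hE
  have hNN := letterPos_lt_letterPos k.lt_succ_self hN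
  have hletter : true ≠ false := Bool.noConfusion
  have hne₁ := letterPos_ne_letterPos hletter hE' hN'
  have hne₂ := letterPos_ne_letterPos hletter hE' hN
  have hne₃ := letterPos_ne_letterPos hletter hE hN'
  have hne₄ := letterPos_ne_letterPos hletter hE hN
  have he := getElem?_letterPos hE'
  have he' := getElem?_letterPos hE
  have hn := getElem?_letterPos hN'
  have hn' := getElem?_letterPos hN
  generalize letterPos w true k = e, letterPos w true (k + 1) = e',
    letterPos w false k = n, letterPos w false (k + 1) = n' at *
  have horders : e' < n ∨ (e < n ∧ n < e' ∧ e' < n') ∨ (e < n ∧ n' < e') ∨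
      (n < e ∧ e' < n') ∨ (n < e ∧ e < n' ∧ n' < e') ∨ n' < e := by omega
  rcases horders with h | h | h | h | h | h
  · rw [hword [e, e', n, n'] (by grind) (by grind)]
    exact iff_of_false (by simp [P2, *]) (by omega)
  · rw [hword [e, n, e', n'] (by grind) (by grind)]
    exact iff_of_true (by simp [P2, *]) h
  · rw [hword [e, n, n', e'] (by grind) (by grind)]
    exact iff_of_false (by simp [P2, *]) (by omega)
  · rw [hword [n, e, e', n'] (by grind) (by grind)]
    exact iff_of_false (by simp [P2, *]) (by omega)
  · rw [hword [n, e, n', e'] (by grind) (by grind)]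
    exact iff_of_false (by simp [P2, *]) (by omega)
  · rw [hword [n, n', e, e'] (by grind) (by grind)]
    exact iff_of_false (by simp [P2, *]) (by omega)

theorem pairedSubword_eq_P2_iff_letterPos_eq (hE : k + 1 < w.count true)
    (hN : k + 1 < w.count false) :
    pairedSubword w (k + 1) = P2 ↔
      letterPos w false k = 2 * k + 1 ∧ letterPos w true (k + 1) = 2 * k + 2 := by
  have hE' : k < w.count true := k.lt_succ_self.trans hE
  have hN' : k < w.count false := k.lt_succ_self.trans hN
  have hcountN := count_take_letterPos hN'
  have hcountE := count_take_letterPos hE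
  have hsumN := count_take_true_add_count_take_false (letterPos_lt_length hN').le
  have hsumE := count_take_true_add_count_take_false (letterPos_lt_length hE).le
  have hletter : true ≠ false := Bool.noConfusion
  have hne := letterPos_ne_letterPos hletter hE hN
  rw [pairedSubword_eq_P2_iff_letterPos_lt hE hN, letterPos_lt_iff hE']
  constructor
  · rintro ⟨hEN, hNE, hEN'⟩
    have hEcount_le := mt (letterPos_lt_iff hE).2 hNE.not_gt
    have hNcount_le := mt (letterPos_lt_iff hN).2 hEN'.not_gt
    omega
  · rintro ⟨hNpos, hEpos⟩
    have hge : ¬ letterPos w false (k + 1) < letterPos w true (k + 1) := by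
      rw [letterPos_lt_iff hN]
      omega
    omega

theorem pairedSubword_eq_P2_iff_exists_append (hE : k + 1 < w.count true)
    (hN : k + 1 < w.count false) :
    pairedSubword w (k + 1) = P2 ↔
      ∃ u v, u.count true = k + 1 ∧ u.count false = k ∧ u ++ false :: true :: v = w := by
  rw [pairedSubword_eq_P2_iff_letterPos_eq hE hN]
  constructor
  · rintro ⟨hNpos, hEpos⟩
    have hN' : k < w.count false := k.lt_succ_self.trans hN
    have hcountN := hNpos ▸ count_take_letterPos hN'
    obtain ⟨hlenN, hletterN⟩ := List.getElem?_eq_some_iff.1 (hNpos ▸ getElem?_letterPos hN')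
    obtain ⟨hlenE, hletterE⟩ := List.getElem?_eq_some_iff.1 (hEpos ▸ getElem?_letterPos hE)
    have hsum := count_take_true_add_count_take_false hlenN.le
    refine ⟨w.take (2 * k + 1), w.drop (2 * k + 3), by omega, hcountN, ?_⟩
    rw [← hletterN, ← hletterE, ← List.drop_eq_getElem_cons, ← List.drop_eq_getElem_cons,
      List.take_append_drop]
  · rintro ⟨u, v, huE, huN, hw⟩
    have hlen : u.length = 2 * k + 1 := by
      rw [← List.count_true_add_count_false, huE, huN]
      ring
    have hNpos := letterPos_count_take (w := w) (b := false) (m := u.length) (by simp [← hw])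
    have hEpos := letterPos_count_take (w := w) (b := true) (m := u.length + 1) (by simp [← hw])
    have htakeN : (w.take u.length).count false = k := by simp [← hw, huN]
    have htakeE : (w.take (u.length + 1)).count true = k + 1 := by
      simp [← hw, List.take_append, List.take_of_length_le, huE]
    rw [htakeN] at hNpos
    rw [htakeE] at hEpos
    exact ⟨hNpos.trans hlen, hEpos.trans (congrArg (· + 1) hlen)⟩

theorem filter_latticeWords_pairedSubword_eq_P2 (k l : ℕ) :
    (latticeWords (k + l + 2) (k + l + 2)).filter (fun w ↦ pairedSubword w (k + 1) = P2)
      = (latticeWords (k + 1) k ×ˢ latticeWords l (l + 1)).image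
        (fun p ↦ p.1 ++ false :: true :: p.2) := by
  ext w
  simp only [Finset.mem_filter, Finset.mem_image, Finset.mem_product, mem_latticeWords,
    Prod.exists]
  constructor
  · rintro ⟨⟨hE, hN⟩, hmatch⟩
    obtain ⟨u, v, huE, huN, rfl⟩ :=
      (pairedSubword_eq_P2_iff_exists_append (by omega) (by omega)).1 hmatch
    simp only [List.count_append, List.count_cons_self, huE, huN, ne_eq, Bool.true_eq_false,
      Bool.false_eq_true, not_false_eq_true, List.count_cons_of_ne] at hE hN
    exact ⟨u, v, ⟨⟨huE, huN⟩, by omega, by omega⟩, rfl⟩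
  · rintro ⟨u, v, ⟨⟨huE, huN⟩, hvE, hvN⟩, rfl⟩
    have hE : (u ++ false :: true :: v).count true = k + l + 2 := by grind
    have hN : (u ++ false :: true :: v).count false = k + l + 2 := by grind
    exact ⟨⟨hE, hN⟩, (pairedSubword_eq_P2_iff_exists_append (by omega) (by omega)).2
      ⟨u, v, huE, huN, rfl⟩⟩

theorem card_filter_pairedSubword_eq_P2 (k l : ℕ) :
    ((latticeWords (k + l + 2) (k + l + 2)).filter fun w ↦ pairedSubword w (k + 1) = P2).card
      = (latticeWords (k + 1) k).card * (latticeWords l (l + 1)).card := by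
  rw [filter_latticeWords_pairedSubword_eq_P2, Finset.card_image_of_injOn, Finset.card_product]
  rintro ⟨u, v⟩ h ⟨u', v'⟩ h' heq
  simp only [Finset.coe_product, Set.mem_prod, Finset.mem_coe, mem_latticeWords] at h h'
  have hlen : u.length = u'.length := by
    rw [← List.count_true_add_count_false, ← List.count_true_add_count_false u']
    omega
  simpa using List.append_inj heq hlen

theorem four_mul_card_filter_pairedSubword_eq_P2 {n i : ℕ} (hi : i ∈ Finset.Icc 1 (n - 1)) :
    4 * ((latticeWords n n).filter fun w ↦ pairedSubword w i = P2).card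
      = i.centralBinom * (n - i).centralBinom := by
  rw [Finset.mem_Icc] at hi
  obtain ⟨k, rfl⟩ := Nat.exists_eq_add_of_le' hi.1
  obtain ⟨l, rfl⟩ : ∃ l, n = k + l + 2 := ⟨n - k - 2, by omega⟩
  rw [card_filter_pairedSubword_eq_P2, show k + l + 2 - (k + 1) = l + 1 by omega,
    ← two_mul_card_latticeWords_succ_left, ← two_mul_card_latticeWords_succ_right]
  ring

theorem sum_pmch (n : ℕ) (P : List Bool) (s : Finset (List Bool)) :
    ∑ w ∈ s, pmch n P w
      = ∑ i ∈ Finset.Icc 1 (n - 1), (s.filter fun w ↦ pairedSubword w i = P).card := by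
  simp only [pmch, Finset.card_filter]
  exact Finset.sum_comm

end Matches

theorem total_P2_matches (n : ℕ) (hn : 1 ≤ n) :
    ∑ᶠ w ∈ {w : List Bool | memL n w}, pmch n P2 w
      = 4^(n-1) - (2*n-1).choose (n-1) := by
  rw [finsum_memL_eq_sum_latticeWords, sum_pmch]
  have hfour : 4 * ∑ i ∈ Finset.Icc 1 (n - 1),
      ((latticeWords n n).filter fun w ↦ pairedSubword w i = P2).card
        = ∑ i ∈ Finset.Icc 1 (n - 1), i.centralBinom * (n - i).centralBinom := by
    rw [Finset.mul_sum]
    exact Finset.sum_congr rfl fun i hi ↦ four_mul_card_filter_pairedSubword_eq_P2 hi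
  have hconv := two_mul_centralBinom_add_sum_Icc hn
  obtain ⟨m, rfl⟩ := Nat.exists_eq_add_of_le' hn
  rw [centralBinom_succ_eq_two_mul_choose, pow_succ] at hconv
  rw [Nat.add_sub_cancel, show 2 * (m + 1) - 1 = 2 * m + 1 by omega]
  rw [Nat.add_sub_cancel] at hfour hconv
  omega
end

section
/- For every n ≥ 1, the number of words L ∈ 𝓛_n with no bounce off the diagonal equals 2·C_n, twice the n-th Catalan number. -/
/-- The path of `w` passes through the interior diagonal point `[i,i]`:
the prefix `w_1 ⋯ w_{2i}` contains exactly `i` `E`'s and `i` `N`'s. -/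
abbrev onDiag (w : List Bool) (i : ℕ) : Prop :=
  (w.take (2*i)).count true = i ∧ (w.take (2*i)).count false = i

/-- The number of crossings of the diagonal: interior diagonal points `[i,i]` with
`w_{2i} = w_{2i+1}`. -/
def crossCount (n : ℕ) (w : List Bool) : ℕ :=
  ((Finset.Icc 1 (n-1)).filter (fun i =>
    onDiag w i ∧ w.getD (2*i-1) false = w.getD (2*i) false)).card

/-- The number of bounces off the diagonal: interior diagonal points `[i,i]` with
`w_{2i} ≠ w_{2i+1}`. -/
def bounceCount (n : ℕ) (w : List Bool) : ℕ :=
  ((Finset.Icc 1 (n-1)).filter (fun i =>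
    onDiag w i ∧ w.getD (2*i-1) false ≠ w.getD (2*i) false)).card

/-!
Cut a path into arches at its visits to the diagonal and reflect every second arch. Each visit where
two arches meet changes from a bounce into a crossing or conversely, so this involution of `𝓛_n`
exchanges the numbers of bounces and crossings. A path without crossings stays on one side of the
diagonal, and there are `C_n` such paths on either side, namely the Dyck paths and their
reflections.
-/

/-- The change in signed distance from the diagonal caused by one step: `+1` for `E`, `-1` for `N`.
Also used to turn other Booleans into signs: a side of the diagonal (`true` below, `false` above)
and the orientation of an arch (`true` kept, `false` reflected). -/
def letterSign (c : Bool) : ℤ := if c then 1 else -1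

/-- The signed distance of the endpoint of a path from the diagonal: the number of `E`'s minus the
number of `N`'s. -/
def pathHeight (w : List Bool) : ℤ := w.count true - w.count false

lemma letterSign_ne_zero (c : Bool) : letterSign c ≠ 0 := by cases c <;> decide

lemma letterSign_beq (s c : Bool) : letterSign (s == c) = letterSign s * letterSign c := by
  cases s <;> cases c <;> rfl

lemma letterSign_mul_letterSign (b c : Bool) :
    letterSign b * letterSign c = if c = b then 1 else -1 := by
  cases b <;> cases c <;> rfl

@[simp]
lemma pathHeight_nil : pathHeight [] = 0 := rfl

lemma pathHeight_cons (c : Bool) (w : List Bool) :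
    pathHeight (c :: w) = letterSign c + pathHeight w := by
  cases c <;> simp [pathHeight, letterSign] <;> ring

lemma pathHeight_take_succ {w : List Bool} {j : ℕ} (hj : j < w.length) :
    pathHeight (w.take (j + 1)) = pathHeight (w.take j) + letterSign (w.getD j false) := by
  rw [List.take_add_one, List.getElem?_eq_getElem hj, List.getD_eq_getElem _ _ hj]
  cases w[j] <;> simp [pathHeight, letterSign] <;> ring

lemma memL_iff_length_pathHeight {n : ℕ} {w : List Bool} :
    memL n w ↔ w.length = 2 * n ∧ pathHeight w = 0 := by
  have hlen : w.count true + w.count false = w.length := w.count_true_add_count_false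
  unfold memL pathHeight
  omega

lemma onDiag_iff_pathHeight_take {w : List Bool} {i : ℕ} (hi : 2 * i ≤ w.length) :
    onDiag w i ↔ pathHeight (w.take (2 * i)) = 0 := by
  have hprefix := memL_iff_length_pathHeight (n := i) (w := w.take (2 * i))
  rwa [List.length_take_of_le hi, eq_self, true_and] at hprefix

/-- The continuation of `flipArches` from a point at signed distance `h` from the diagonal; the
current arch is copied if `s = true` and reflected if `s = false`, and `s` changes at each return
to the diagonal. -/
def flipArchesFrom (s : Bool) (h : ℤ) : List Bool → List Bool
  | [] => []
  | c :: w =>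
    (s == c) :: flipArchesFrom (if h + letterSign c = 0 then !s else s) (h + letterSign c) w

lemma length_flipArchesFrom (s : Bool) (h : ℤ) (w : List Bool) :
    (flipArchesFrom s h w).length = w.length := by
  induction w generalizing s h with
  | nil => rfl
  | cons c w ih => simp only [flipArchesFrom, List.length_cons, ih]

lemma letterSign_ite_not_mul (s : Bool) (h : ℤ) :
    letterSign (if h = 0 then !s else s) * h = letterSign s * h := by
  split_ifs with h0
  · simp only [h0, mul_zero]
  · rfl

lemma abs_pathHeight_take_flipArchesFrom (s : Bool) (h : ℤ) (w : List Bool) (j : ℕ) :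
    |letterSign s * h + pathHeight ((flipArchesFrom s h w).take j)|
      = |h + pathHeight (w.take j)| := by
  induction w generalizing s h j with
  | nil => cases s <;> simp [flipArchesFrom, letterSign]
  | cons c w ih =>
    cases j with
    | zero => cases s <;> simp [letterSign]
    | succ j =>
      simp only [flipArchesFrom, List.take_succ_cons, pathHeight_cons, letterSign_beq]
      rw [← add_assoc, ← add_assoc, ← mul_add, ← ih, letterSign_ite_not_mul]

lemma flipArchesFrom_flipArchesFrom (s : Bool) (h : ℤ) (w : List Bool) :
    flipArchesFrom s (letterSign s * h) (flipArchesFrom s h w) = w := by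
  induction w generalizing s h with
  | nil => rfl
  | cons c w ih =>
    have beq_beq : (s == (s == c)) = c := by cases s <;> cases c <;> rfl
    simp only [flipArchesFrom, letterSign_beq, ← mul_add, mul_eq_zero, letterSign_ne_zero,
      false_or, beq_beq]
    rw [← letterSign_ite_not_mul, ih]

lemma flipArchesFrom_getD_eq_getD_succ_iff (s : Bool) {h : ℤ} {w : List Bool} {j : ℕ}
    (hj : j + 1 < w.length) (hzero : h + pathHeight (w.take (j + 1)) = 0) :
    (flipArchesFrom s h w).getD j false = (flipArchesFrom s h w).getD (j + 1) false ↔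
      w.getD j false ≠ w.getD (j + 1) false := by
  induction w generalizing s h j with
  | nil => simp at hj
  | cons c w ih =>
    rw [List.take_succ_cons, pathHeight_cons, ← add_assoc] at hzero
    cases j with
    | succ j =>
      simpa only [flipArchesFrom, List.getD_cons_succ] using ih _ (by simpa using hj) hzero
    | zero =>
      cases w with
      | nil => simp at hj
      | cons d w =>
        have hreturn : h + letterSign c = 0 := by simpa using hzero
        cases s <;> cases c <;> cases d <;> simp [flipArchesFrom, hreturn]

/-- The path obtained by reflecting every second arch in the diagonal, starting with the second one,
where the arches of a path are its pieces between consecutive visits to the diagonal. -/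
def flipArches (w : List Bool) : List Bool := flipArchesFrom true 0 w

lemma flipArches_involutive : Function.Involutive flipArches :=
  flipArchesFrom_flipArchesFrom true 0

lemma length_flipArches (w : List Bool) : (flipArches w).length = w.length :=
  length_flipArchesFrom true 0 w

lemma pathHeight_take_flipArches_eq_zero_iff (w : List Bool) (j : ℕ) :
    pathHeight ((flipArches w).take j) = 0 ↔ pathHeight (w.take j) = 0 := by
  have habs := abs_pathHeight_take_flipArchesFrom true 0 w j
  rw [mul_zero, zero_add, zero_add] at habs
  rw [← abs_eq_zero, flipArches, habs, abs_eq_zero]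

lemma memL_flipArches_iff {n : ℕ} {w : List Bool} : memL n (flipArches w) ↔ memL n w := by
  have hzero := pathHeight_take_flipArches_eq_zero_iff w w.length
  rw [← length_flipArches, List.take_length, length_flipArches, List.take_length] at hzero
  rw [memL_iff_length_pathHeight, memL_iff_length_pathHeight, length_flipArches, hzero]

lemma crossCount_flipArches {n : ℕ} {w : List Bool} (hw : memL n w) :
    crossCount n (flipArches w) = bounceCount n w := by
  have hlen : w.length = 2 * n := (memL_iff_length_pathHeight.1 hw).1
  refine congrArg Finset.card (Finset.filter_congr fun i hi => ?_)
  obtain ⟨hi1, hin⟩ := Finset.mem_Icc.1 hi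
  rw [onDiag_iff_pathHeight_take (by rw [length_flipArches]; omega),
    onDiag_iff_pathHeight_take (by omega), pathHeight_take_flipArches_eq_zero_iff]
  refine and_congr_right fun hzero => ?_
  obtain ⟨j, hj⟩ : ∃ j, 2 * i = j + 1 := ⟨2 * i - 1, by omega⟩
  rw [hj] at hzero ⊢
  exact flipArchesFrom_getD_eq_getD_succ_iff true (by omega) (by rwa [zero_add])

theorem ncard_bounceCount_eq_ncard_crossCount (n k : ℕ) :
    {w | memL n w ∧ bounceCount n w = k}.ncard = {w | memL n w ∧ crossCount n w = k}.ncard := by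
  have hpreimage : {w | memL n w ∧ bounceCount n w = k}
      = flipArches ⁻¹' {w | memL n w ∧ crossCount n w = k} := by
    ext w
    simp only [Set.mem_preimage, Set.mem_ofPred_eq, memL_flipArches_iff]
    exact and_congr_right fun hw => by rw [crossCount_flipArches hw]
  rw [hpreimage, ← flipArches_involutive.image_eq_preimage_symm,
    Set.ncard_image_of_injective _ flipArches_involutive.injective]

/-- The path stays weakly on one side of the diagonal: below it if `b = true`, above it if
`b = false`. -/
def StaysOnSide (b : Bool) (w : List Bool) : Prop :=
  ∀ j, 0 ≤ letterSign b * pathHeight (w.take j)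

lemma crossCount_eq_zero_iff {n : ℕ} {w : List Bool} (hw : memL n w) :
    crossCount n w = 0 ↔ ∀ j, j + 1 < w.length → pathHeight (w.take (j + 1)) = 0 →
      w.getD j false ≠ w.getD (j + 1) false := by
  have hlen : w.length = 2 * n := (memL_iff_length_pathHeight.1 hw).1
  rw [crossCount, Finset.card_eq_zero, Finset.filter_eq_empty_iff]
  constructor
  · intro hcross j hj hzero heq
    obtain ⟨i, hi⟩ : ∃ i, j + 1 = 2 * i := by
      have hlen_take := (w.take (j + 1)).count_true_add_count_false
      rw [List.length_take_of_le hj.le] at hlen_take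
      rw [pathHeight] at hzero
      exact ⟨(w.take (j + 1)).count true, by omega⟩
    refine hcross (x := i) (Finset.mem_Icc.2 ⟨by omega, by omega⟩) ⟨?_, ?_⟩
    · rwa [onDiag_iff_pathHeight_take (by omega), ← hi]
    · rwa [← hi]
  · rintro hcross i hi ⟨hdiag, heq⟩
    obtain ⟨hi1, hin⟩ := Finset.mem_Icc.1 hi
    rw [onDiag_iff_pathHeight_take (by omega)] at hdiag
    obtain ⟨j, hj⟩ : ∃ j, 2 * i = j + 1 := ⟨2 * i - 1, by omega⟩
    rw [hj] at hdiag heq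
    exact hcross j (by omega) hdiag heq

lemma StaysOnSide.getD_ne_of_pathHeight_take_succ_eq_zero {b : Bool} {w : List Bool}
    (hside : StaysOnSide b w) {j : ℕ} (hj : j < w.length)
    (hzero : pathHeight (w.take (j + 1)) = 0) : w.getD j false ≠ b := by
  intro heq
  have hstep := congrArg (letterSign b * ·) (pathHeight_take_succ hj)
  simp only [mul_add, letterSign_mul_letterSign, if_pos heq, hzero] at hstep
  have hprev := hside j
  omega

lemma StaysOnSide.getD_eq_of_pathHeight_take_eq_zero {b : Bool} {w : List Bool}
    (hside : StaysOnSide b w) {j : ℕ} (hj : j < w.length)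
    (hzero : pathHeight (w.take j) = 0) : w.getD j false = b := by
  by_contra hne
  have hstep := congrArg (letterSign b * ·) (pathHeight_take_succ hj)
  simp only [mul_add, letterSign_mul_letterSign, if_neg hne, hzero] at hstep
  have hnext := hside (j + 1)
  omega

lemma staysOnSide_getD_zero_of_no_crossing {w : List Bool}
    (hcross : ∀ j, j + 1 < w.length → pathHeight (w.take (j + 1)) = 0 →
      w.getD j false ≠ w.getD (j + 1) false) :
    StaysOnSide (w.getD 0 false) w := by
  set b := w.getD 0 false
  have hprefix (j : ℕ) : 0 ≤ letterSign b * pathHeight (w.take j) ∧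
      (j < w.length → letterSign b * pathHeight (w.take j) = 0 → w.getD j false = b) := by
    induction j with
    | zero => exact ⟨by simp, fun _ _ => rfl⟩
    | succ j ih =>
      obtain ⟨hnonneg, hreturn⟩ := ih
      rcases le_or_gt w.length j with hj | hj
      · have htake : w.take (j + 1) = w.take j := by
          rw [List.take_of_length_le hj, List.take_of_length_le (by omega)]
        exact ⟨htake ▸ hnonneg, by omega⟩
      have hstep := congrArg (letterSign b * ·) (pathHeight_take_succ hj)
      simp only [mul_add, letterSign_mul_letterSign] at hstep
      by_cases hletter : w.getD j false = b
      · rw [if_pos hletter] at hstep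
        exact ⟨by omega, by omega⟩
      · have hpos : letterSign b * pathHeight (w.take j) ≠ 0 := fun h => hletter (hreturn hj h)
        rw [if_neg hletter] at hstep
        refine ⟨by omega, fun hj' hzero => ?_⟩
        have hne := hcross j hj' ((mul_eq_zero.1 hzero).resolve_left (letterSign_ne_zero b))
        exact Bool.not_inj ((Bool.eq_not.2 hne).symm.trans (Bool.eq_not.2 hletter))
  exact fun j => (hprefix j).1

lemma crossCount_eq_zero_iff_exists_staysOnSide {n : ℕ} {w : List Bool} (hw : memL n w) :
    crossCount n w = 0 ↔ ∃ b, StaysOnSide b w := by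
  rw [crossCount_eq_zero_iff hw]
  refine ⟨fun hcross => ⟨_, staysOnSide_getD_zero_of_no_crossing hcross⟩, ?_⟩
  rintro ⟨b, hside⟩ j hj hzero
  rw [hside.getD_eq_of_pathHeight_take_eq_zero hj hzero]
  exact hside.getD_ne_of_pathHeight_take_succ_eq_zero (by omega) hzero

/-- The translation of Dyck steps into letters that turns Dyck words into paths on side `b` of the
diagonal: up-steps lead away from the diagonal. -/
def dyckLetter (b : Bool) : DyckStep ≃ Bool where
  toFun x := b == (x = .U)
  invFun c := if c = b then .U else .D
  left_inv x := by cases b <;> cases x <;> rfl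
  right_inv c := by cases b <;> cases c <;> rfl

lemma letterSign_mul_pathHeight_map_dyckLetter (b : Bool) (l : List DyckStep) :
    letterSign b * pathHeight (l.map (dyckLetter b)) = l.count .U - l.count .D := by
  have hU := List.count_map_of_injective l _ (dyckLetter b).injective .U
  have hD := List.count_map_of_injective l _ (dyckLetter b).injective .D
  rw [← hU, ← hD]
  cases b <;> simp [dyckLetter, pathHeight, letterSign]

lemma memL_and_staysOnSide_map_dyckLetter_iff (n : ℕ) (b : Bool) (l : List DyckStep) :
    memL n (l.map (dyckLetter b)) ∧ StaysOnSide b (l.map (dyckLetter b)) ↔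
      ∃ p : DyckWord, p.semilength = n ∧ p.toList = l := by
  have hheight : pathHeight (l.map (dyckLetter b)) = 0 ↔ l.count .U = l.count .D := by
    rw [← mul_right_inj' (letterSign_ne_zero b), letterSign_mul_pathHeight_map_dyckLetter]
    omega
  have hside : StaysOnSide b (l.map (dyckLetter b)) ↔
      ∀ j, (l.take j).count .D ≤ (l.take j).count .U := by
    simp only [StaysOnSide, ← List.map_take, letterSign_mul_pathHeight_map_dyckLetter, sub_nonneg,
      Nat.cast_le]
  rw [memL_iff_length_pathHeight, List.length_map, hheight, hside]
  constructor
  · rintro ⟨⟨hlen, hcount⟩, hprefix⟩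
    let p : DyckWord := ⟨l, hcount, hprefix⟩
    have hp : 2 * p.semilength = l.length := p.two_mul_semilength_eq_length
    exact ⟨p, by omega, rfl⟩
  · rintro ⟨p, rfl, rfl⟩
    exact ⟨⟨p.two_mul_semilength_eq_length.symm, p.count_U_eq_count_D⟩, p.count_D_le_count_U⟩

lemma image_map_dyckLetter_eq (n : ℕ) (b : Bool) :
    (fun p : DyckWord => p.toList.map (dyckLetter b)) '' {p | p.semilength = n}
      = {w | memL n w ∧ StaysOnSide b w} := by
  ext w
  obtain ⟨l, rfl⟩ := List.map_surjective_iff.2 (dyckLetter b).surjective w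
  rw [Set.mem_ofPred_eq, memL_and_staysOnSide_map_dyckLetter_iff]
  simp only [Set.mem_image, Set.mem_ofPred_eq,
    (List.map_injective_iff.2 (dyckLetter b).injective).eq_iff]

lemma ncard_staysOnSide (n : ℕ) (b : Bool) :
    {w | memL n w ∧ StaysOnSide b w}.ncard = catalan n := by
  have hinj : Function.Injective fun p : DyckWord => p.toList.map (dyckLetter b) :=
    (List.map_injective_iff.2 (dyckLetter b).injective).comp fun _ _ => DyckWord.ext
  rw [← image_map_dyckLetter_eq, Set.ncard_image_of_injective _ hinj,
    ← DyckWord.card_dyckWord_semilength_eq_catalan, ← Nat.card_eq_fintype_card]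
  rfl

lemma ncard_crossCount_eq_zero {n : ℕ} (hn : n ≠ 0) :
    {w | memL n w ∧ crossCount n w = 0}.ncard = 2 * catalan n := by
  have hunion : {w | memL n w ∧ crossCount n w = 0}
      = {w | memL n w ∧ StaysOnSide true w} ∪ {w | memL n w ∧ StaysOnSide false w} := by
    ext w
    simp only [Set.mem_union, Set.mem_ofPred_eq, ← and_or_left]
    refine and_congr_right fun hw => ?_
    rw [crossCount_eq_zero_iff_exists_staysOnSide hw, Bool.exists_bool, or_comm]
  have hdisjoint : Disjoint {w | memL n w ∧ StaysOnSide true w}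
      {w | memL n w ∧ StaysOnSide false w} := by
    refine Set.disjoint_left.2 fun w ⟨hw, htrue⟩ ⟨_, hfalse⟩ => ?_
    have hlen : 0 < w.length := by
      rw [(memL_iff_length_pathHeight.1 hw).1]
      omega
    have hfirst_true := htrue.getD_eq_of_pathHeight_take_eq_zero hlen rfl
    have hfirst_false := hfalse.getD_eq_of_pathHeight_take_eq_zero hlen rfl
    exact Bool.false_ne_true (hfirst_false.symm.trans hfirst_true)
  have hfinite (b : Bool) : {w | memL n w ∧ StaysOnSide b w}.Finite :=
    (List.finite_length_eq Bool (2 * n)).subset fun _ hw => (memL_iff_length_pathHeight.1 hw.1).1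
  rw [hunion, Set.ncard_union_eq hdisjoint (hfinite true) (hfinite false), ncard_staysOnSide,
    ncard_staysOnSide, two_mul]

theorem count_no_bounce_eq_two_catalan (n : ℕ) (hn : 1 ≤ n) :
    {w : List Bool | memL n w ∧ bounceCount n w = 0}.ncard
      = 2 * ((2*n).choose n / (n+1)) := by
  rw [ncard_bounceCount_eq_ncard_crossCount, ncard_crossCount_eq_zero (by omega),
    catalan_eq_centralBinom_div, Nat.centralBinom]
end

section
/- For every n ≥ 2, the number of words L ∈ 𝓛_n that bounce off the diagonal an odd number of times equals 2·binom(2n−2, n−2). -/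
/-!
Give a word the sign `(-1) ^ k` if it bounces `k` times. Fix the part of a path up to an interior
diagonal point. Exchanging `E` and `N` in the rest turns a bounce at that point into a crossing, or
conversely, and keeps all later bounces, so the possible continuations have signed count `0`. From
a point off the diagonal the signed count of the continuations obeys Pascal's rule, so it is a
ballot number. Hence the total signed count is that of the paths without interior diagonal points,
`2 * catalan (n - 1)`. This is the number of words with evenly many bounces minus the number with
oddly many, while the sum of the two numbers is `(2 * n).choose n`.
-/

section Words

/-- The words with exactly `e` letters `E` and `m` letters `N`. -/
def words (e m : ℕ) : Finset (List Bool) :=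
  (List.replicate e true ++ List.replicate m false).permutations.toFinset

variable {e m : ℕ} {w : List Bool}

theorem mem_words : w ∈ words e m ↔ w.count true = e ∧ w.count false = m := by
  simp [words, List.perm_iff_count, Bool.forall_bool, List.count_replicate, and_comm]

theorem words_zero_left (m : ℕ) : words 0 m = {List.replicate m false} := by
  ext w
  simp [words, List.perm_replicate]

theorem words_zero_right (e : ℕ) : words e 0 = {List.replicate e true} := by
  ext w
  simp [words, List.perm_replicate]

theorem count_map_not (w : List Bool) (b : Bool) : (w.map not).count b = w.count (!b) := by
  rw [← List.count_map_of_injective w not Bool.not_injective, Bool.not_not]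

theorem map_not_mem_words (hw : w ∈ words e m) : w.map not ∈ words m e := by
  rw [mem_words] at hw ⊢
  rwa [count_map_not, count_map_not, and_comm]

theorem words_succ_succ (e m : ℕ) :
    words (e + 1) (m + 1) =
      (words e (m + 1)).image (List.cons true) ∪ (words (e + 1) m).image (List.cons false) := by
  ext (_ | ⟨_ | _, t⟩) <;> simp [mem_words]

theorem sum_words_succ_succ {M : Type*} [AddCommMonoid M] (e m : ℕ) (f : List Bool → M) :
    ∑ w ∈ words (e + 1) (m + 1), f w =
      ∑ w ∈ words e (m + 1), f (true :: w) + ∑ w ∈ words (e + 1) m, f (false :: w) := by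
  have h_disj : Disjoint ((words e (m + 1)).image (List.cons true))
      ((words (e + 1) m).image (List.cons false)) := by
    simp [Finset.disjoint_left]
  rw [words_succ_succ, Finset.sum_union h_disj, Finset.sum_image List.cons_injective.injOn,
    Finset.sum_image List.cons_injective.injOn]

theorem card_words (e m : ℕ) : (words e m).card = (e + m).choose e := by
  induction e generalizing m with
  | zero => simp [words_zero_left]
  | succ e ihe =>
    induction m with
    | zero => simp [words_zero_right]
    | succ m ihm =>
      have h_pascal : (words (e + 1) (m + 1)).card =
          (words e (m + 1)).card + (words (e + 1) m).card := by
        simpa only [Finset.card_eq_sum_ones] using sum_words_succ_succ e m fun _ => 1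
      rw [h_pascal, ihe, ihm, ← add_assoc, ← add_assoc, add_right_comm e 1 m,
        Nat.choose_succ_succ' (e + m + 1)]

end Words

section Bounces

/-- The number of bounces off the diagonal of a path that ends on the diagonal, written as a
recursion on the word: a point of such a path lies on the diagonal if and only if the word after it
has as many `E`'s as `N`'s. -/
def bounces : List Bool → ℕ
  | b :: c :: t =>
    (if (c :: t).count true = (c :: t).count false ∧ b ≠ c then 1 else 0) + bounces (c :: t)
  | _ => 0

theorem bounces_cons_of_mem_words {e m : ℕ} {b c : Bool} {w : List Bool}
    (hw : c :: w ∈ words e m) :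
    bounces (b :: c :: w) = (if e = m ∧ b ≠ c then 1 else 0) + bounces (c :: w) := by
  rw [bounces, (mem_words.1 hw).1, (mem_words.1 hw).2]

theorem bounces_cons_replicate (b c : Bool) (k : ℕ) : bounces (b :: List.replicate k c) = 0 := by
  induction k generalizing b with
  | zero => rfl
  | succ k ih => cases c <;> simp [List.replicate_succ, bounces, ih, List.count_replicate]

theorem bounces_map_not (w : List Bool) : bounces (w.map not) = bounces w := by
  induction w with
  | nil => rfl
  | cons b t ih =>
    cases t with
    | nil => rfl
    | cons c t =>
      have h_balanced : ((!c) :: t.map not).count true = ((!c) :: t.map not).count false ↔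
          (c :: t).count true = (c :: t).count false := by
        rw [← List.map_cons, count_map_not, count_map_not]
        exact eq_comm
      rw [List.map_cons] at ih
      simp only [List.map_cons, bounces, ih, h_balanced, ne_eq, Bool.not_inj_iff]

theorem bounces_eq_card_filter (w : List Bool) :
    bounces w = ((Finset.range (w.length - 1)).filter fun j =>
      (w.drop (j + 1)).count true = (w.drop (j + 1)).count false ∧
        w.getD j false ≠ w.getD (j + 1) false).card := by
  induction w with
  | nil => rfl
  | cons b t ih =>
    cases t with
    | nil => rfl
    | cons c t =>
      rw [bounces, ih, Finset.card_filter, Finset.card_filter]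
      simp only [List.length_cons, Nat.add_sub_cancel]
      rw [Finset.sum_range_succ', add_comm]
      simp only [List.drop_succ_cons, List.getD_cons_succ, List.getD_cons_zero, List.drop_zero]

theorem count_take_eq_iff_count_drop_eq {w : List Bool} (hw : w.count true = w.count false)
    (k : ℕ) :
    (w.take k).count true = (w.take k).count false ↔
      (w.drop k).count true = (w.drop k).count false := by
  rw [← List.take_append_drop k w, List.count_append, List.count_append] at hw
  omega

theorem onDiag_iff_count_take_eq {w : List Bool} {i : ℕ} (hi : 2 * i ≤ w.length) :
    onDiag w i ↔ (w.take (2 * i)).count true = (w.take (2 * i)).count false := by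
  have h_length := List.count_true_add_count_false (w.take (2 * i))
  rw [List.length_take_of_le hi] at h_length
  omega

theorem even_of_count_take_eq {w : List Bool} {k : ℕ} (hk : k ≤ w.length)
    (h : (w.take k).count true = (w.take k).count false) : Even k := by
  rw [← List.length_take_of_le hk, ← List.count_true_add_count_false, h]
  exact ⟨_, rfl⟩

theorem bounceCount_eq_bounces {n : ℕ} {w : List Bool} (hw : memL n w) :
    bounceCount n w = bounces w := by
  have h_length : w.length = 2 * n := by
    rw [← List.count_true_add_count_false w, hw.1, hw.2, two_mul]
  rw [bounces_eq_card_filter]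
  simp only [← count_take_eq_iff_count_drop_eq (hw.1.trans hw.2.symm)]
  refine Finset.card_bij (fun i _ => 2 * i - 1) ?_ ?_ ?_
  · intro i hi
    simp only [Finset.mem_filter, Finset.mem_Icc, Finset.mem_range] at hi ⊢
    obtain ⟨⟨hi_pos, hi_lt⟩, h_diag, h_turn⟩ := hi
    rw [Nat.sub_add_cancel (by omega : 1 ≤ 2 * i)]
    exact ⟨by omega, (onDiag_iff_count_take_eq (by omega)).1 h_diag, h_turn⟩
  · intro i hi i' hi' h_eq
    simp only [Finset.mem_filter, Finset.mem_Icc] at hi hi'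
    omega
  · intro j hj
    simp only [Finset.mem_filter, Finset.mem_range] at hj
    obtain ⟨hj_lt, h_take, h_turn⟩ := hj
    obtain ⟨i, hi⟩ := even_iff_exists_two_mul.1 (even_of_count_take_eq (by omega) h_take)
    obtain rfl : j = 2 * i - 1 := by omega
    rw [hi] at h_take h_turn
    refine ⟨i, ?_, rfl⟩
    simp only [Finset.mem_filter, Finset.mem_Icc]
    exact ⟨by omega, (onDiag_iff_count_take_eq (by omega)).2 h_take, h_turn⟩

end Bounces

section SignedCount

/-- The signed count of the words in `words e m`, where a word that follows the letter `b` has the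
sign `(-1) ^ k` if it makes `k` bounces, including one at its start. -/
def signedCount (b : Bool) (e m : ℕ) : ℤ :=
  ∑ w ∈ words e m, (-1) ^ bounces (b :: w)

theorem signedCount_not_comm (b : Bool) (e m : ℕ) :
    signedCount (!b) m e = signedCount b e m := by
  have h_invol (w : List Bool) : (w.map not).map not = w := by
    rw [List.map_map, Bool.involutive_not.comp_self, List.map_id]
  refine Finset.sum_nbij' (List.map not) (List.map not) (fun _ => map_not_mem_words)
    (fun _ => map_not_mem_words) (fun w _ => h_invol w) (fun w _ => h_invol w) fun w _ => ?_
  rw [← bounces_map_not, List.map_cons, Bool.not_not]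

theorem signedCount_zero_left (b : Bool) (m : ℕ) : signedCount b 0 m = 1 := by
  rw [signedCount, words_zero_left, Finset.sum_singleton, bounces_cons_replicate, pow_zero]

theorem signedCount_succ_succ (b : Bool) (e m : ℕ) :
    signedCount b (e + 1) (m + 1) =
      (if e = m ∧ b ≠ true then -1 else 1) * signedCount true e (m + 1) +
        (if e = m ∧ b ≠ false then -1 else 1) * signedCount false (e + 1) m := by
  rw [signedCount, sum_words_succ_succ, signedCount, signedCount, Finset.mul_sum, Finset.mul_sum]
  congr 1 <;> refine Finset.sum_congr rfl fun w hw => ?_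
  · have h_cons : true :: w ∈ words (e + 1) (m + 1) := by simpa [mem_words] using hw
    simp only [bounces_cons_of_mem_words h_cons, add_left_inj, pow_add, pow_ite, pow_one, pow_zero]
  · have h_cons : false :: w ∈ words (e + 1) (m + 1) := by simpa [mem_words] using hw
    simp only [bounces_cons_of_mem_words h_cons, add_left_inj, pow_add, pow_ite, pow_one, pow_zero]

theorem signedCount_succ_succ_of_ne (b : Bool) {e m : ℕ} (h : e ≠ m) :
    signedCount b (e + 1) (m + 1) = signedCount true e (m + 1) + signedCount false (e + 1) m := by
  simp only [signedCount_succ_succ b, h, false_and, if_false, one_mul]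

theorem signedCount_self (b : Bool) (k : ℕ) : signedCount b (k + 1) (k + 1) = 0 := by
  rw [signedCount_succ_succ, ← signedCount_not_comm true]
  cases b <;> simp

theorem signedCount_eq_choose_sub_choose (b : Bool) {e k : ℕ} (h : e ≤ k + 1) :
    signedCount b e (k + 1) = (e + k).choose e - (e + k).choose (k + 1) := by
  induction e generalizing b k with
  | zero => simp [signedCount_zero_left]
  | succ e ihe =>
    induction k generalizing b with
    | zero =>
      obtain rfl : e = 0 := by omega
      rw [signedCount_self, sub_self]
    | succ k ihk =>
      rcases h.eq_or_lt with h_eq | h_lt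
      · rw [h_eq, signedCount_self, sub_self]
      · have h_right : e + 1 + k = e + (k + 1) := by omega
        have h_sum : e + 1 + (k + 1) = e + (k + 1) + 1 := by omega
        rw [signedCount_succ_succ_of_ne b (by omega), ihe true (by omega), ihk false (by omega),
          h_right, h_sum, Nat.choose_succ_succ' _ e, Nat.choose_succ_succ' _ (k + 1)]
        push_cast
        ring

theorem sum_neg_one_pow_bounces (k : ℕ) :
    ∑ w ∈ words (k + 1) (k + 1), (-1 : ℤ) ^ bounces w =
      2 * ((2 * k).choose k - (2 * k).choose (k + 1)) := by
  calc ∑ w ∈ words (k + 1) (k + 1), (-1 : ℤ) ^ bounces w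
      = signedCount true k (k + 1) + signedCount false (k + 1) k := sum_words_succ_succ k k _
    _ = 2 * signedCount true k (k + 1) := by
      rw [← signedCount_not_comm false, Bool.not_false, two_mul]
    _ = 2 * ((2 * k).choose k - (2 * k).choose (k + 1)) := by
      rw [signedCount_eq_choose_sub_choose true k.le_succ, two_mul k]

end SignedCount

section OddBounces

theorem sum_neg_one_pow_eq_card_sub {R α : Type*} [Ring R] (s : Finset α) (f : α → ℕ) :
    ∑ a ∈ s, (-1 : R) ^ f a = s.card - 2 * (s.filter fun a => Odd (f a)).card := by
  have h_term (a : α) : (-1 : R) ^ f a = 1 - 2 * if Odd (f a) then 1 else 0 := by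
    split_ifs with h
    · rw [h.neg_one_pow]; norm_num
    · rw [(Nat.not_odd_iff_even.1 h).neg_one_pow]; norm_num
  simp only [h_term, Finset.sum_sub_distrib, ← Finset.mul_sum, Finset.sum_boole,
    Finset.card_eq_sum_ones, Nat.cast_sum, Nat.cast_one]

theorem choose_two_mul_add_two (k : ℕ) :
    (2 * (k + 1)).choose (k + 1) = 2 * (2 * k).choose k + 2 * (2 * k).choose (k + 1) := by
  calc (2 * (k + 1)).choose (k + 1)
      = (2 * k + 1).choose k + (2 * k + 1).choose (k + 1) := Nat.choose_succ_succ' _ _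
    _ = 2 * (2 * k + 1).choose (k + 1) := by rw [← Nat.choose_symm_half, ← two_mul]
    _ = 2 * (2 * k).choose k + 2 * (2 * k).choose (k + 1) := by
      rw [Nat.choose_succ_succ', mul_add]

theorem card_filter_odd_bounces (k : ℕ) :
    ((words (k + 1) (k + 1)).filter fun w => Odd (bounces w)).card =
      2 * (2 * k).choose (k + 1) := by
  have h_signed := sum_neg_one_pow_eq_card_sub (R := ℤ) (words (k + 1) (k + 1)) bounces
  rw [sum_neg_one_pow_bounces, card_words, ← two_mul, choose_two_mul_add_two] at h_signed
  push_cast at h_signed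
  omega

end OddBounces

theorem count_odd_bounces (n : ℕ) (hn : 2 ≤ n) :
    {w : List Bool | memL n w ∧ Odd (bounceCount n w)}.ncard
      = 2 * (2*n-2).choose (n-2) := by
  have h_set : {w : List Bool | memL n w ∧ Odd (bounceCount n w)} =
      (words n n).filter fun w => Odd (bounces w) := by
    ext w
    simp only [Set.mem_ofPred_eq, Finset.coe_filter, mem_words, memL]
    refine and_congr_right fun hw => ?_
    rw [bounceCount_eq_bounces hw]
  obtain ⟨k, rfl⟩ : ∃ k, n = k + 2 := ⟨n - 2, by omega⟩
  have h_symm : (2 * (k + 1)).choose (k + 2) = (2 * (k + 1)).choose k :=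
    Nat.choose_symm_of_eq_add (by omega)
  rw [h_set, Set.ncard_coe_finset, card_filter_odd_bounces, h_symm]
  rfl
end
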